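/- Let d ≥ 1, let f : ℝ^d → ℝ be continuously differentiable, let δ > 0 and x ∈ ℝ^d. Then the gradient of the ball-averaged function equals the rescaled sphere average: if u is uniformly distributed on the unit sphere S^{d−1} ⊆ ℝ^d and v is uniformly distributed on the closed unit ball of ℝ^d, then (d/δ)·E[f(x + δu)·u] = E[∇f(x + δv)]; equivalently, the gradient at x of the map y ↦ E[f(y + δv)] equals (d/δ)·E[f(x + δu)·u]. -/

import Mathlib

open MeasureTheory Metric
open scoped Gradient ENNReal

/-- The uniform (normalized rotation-invariant) probability measure on the unit
sphere of `ℝ^d`. -/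
noncomputable def sphereUniform (d : ℕ) :
    Measure (sphere (0 : EuclideanSpace ℝ (Fin d)) 1) :=
  ((volume : Measure (EuclideanSpace ℝ (Fin d))).toSphere Set.univ)⁻¹ •
    (volume : Measure (EuclideanSpace ℝ (Fin d))).toSphere

/-!
The mass of `f` in the unit ball about `y`, written in polar coordinates about `0`, is
`∫ u, ∫ r in 0..ρ y u, r ^ (n - 1) • f (r • u)`, where `ρ y u` is the distance at which the ray
in direction `u` leaves the ball. Since `ρ 0 u = 1` and `y ↦ ρ y u` has gradient `u` at `0`, the
fundamental theorem of calculus gives the derivative `∫ u, ⟪u, ·⟫ • f u` at `y = 0`. So averaging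
over a ball makes every continuous function differentiable, its gradient being a sphere average;
for a `C¹` function one may also differentiate under the integral sign, and the two gradients agree.
-/

open scoped RealInnerProductSpace Topology

section Parametric

variable {X H F : Type*} [TopologicalSpace X] [T2Space X] [MeasurableSpace X]
  [OpensMeasurableSpace X] {ν : Measure X} [IsFiniteMeasureOnCompacts ν]
  [NormedAddCommGroup H] [NormedSpace ℝ H] [LocallyCompactSpace H]
  [NormedAddCommGroup F] [NormedSpace ℝ F]

theorem hasFDerivAt_setIntegral_of_continuousOn_fderiv {K : Set X} (hK : IsCompact K)
    {s : Set H} {y₀ : H} (hs : s ∈ 𝓝 y₀) {Φ : H → X → F} {Φ' : H → X → H →L[ℝ] F}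
    (hΦ : ∀ y ∈ s, ContinuousOn (Φ y) K)
    (hΦ' : ContinuousOn (fun p : H × X => Φ' p.1 p.2) (s ×ˢ K))
    (hderiv : ∀ y ∈ s, ∀ a ∈ K, HasFDerivAt (Φ · a) (Φ' y a) y) :
    HasFDerivAt (fun y => ∫ a in K, Φ y a ∂ν) (∫ a in K, Φ' y₀ a ∂ν) y₀ := by
  obtain ⟨t, ht, hts, htc⟩ := local_compact_nhds hs
  obtain ⟨C, hC⟩ := (htc.prod hK).exists_bound_of_continuousOn
    (hΦ'.mono (Set.prod_mono_left hts))
  have hy₀ : y₀ ∈ s := mem_of_mem_nhds hs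
  have hΦ'y₀ : ContinuousOn (Φ' y₀) K :=
    hΦ'.comp (Continuous.prodMk_right y₀).continuousOn fun a ha => ⟨hy₀, ha⟩
  have hmem : ∀ᵐ a ∂ν.restrict K, a ∈ K := ae_restrict_mem hK.measurableSet
  refine hasFDerivAt_integral_of_dominated_of_fderiv_le (bound := fun _ => C) ht
    (Filter.eventually_of_mem hs fun y hy =>
      (hΦ y hy).aestronglyMeasurable_of_isCompact hK hK.measurableSet)
    ((hΦ y₀ hy₀).integrableOn_compact hK)
    (hΦ'y₀.aestronglyMeasurable_of_isCompact hK hK.measurableSet)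
    ?_ (integrableOn_const hK.measure_ne_top) ?_
  · filter_upwards [hmem] with a ha y hy using hC (y, a) ⟨hy, ha⟩
  · filter_upwards [hmem] with a ha y hy using hderiv y (hts hy) a ha

end Parametric

section Polar

variable {E F : Type*} [NormedAddCommGroup E] [NormedSpace ℝ E] [Nontrivial E]
  [FiniteDimensional ℝ E] [MeasurableSpace E] [BorelSpace E]
  [NormedAddCommGroup F] [NormedSpace ℝ F] (μ : Measure E) [μ.IsAddHaarMeasure]

theorem integral_volumeIoiPow (n : ℕ) (g : ℝ → F) :
    ∫ r : Set.Ioi (0 : ℝ), g r ∂Measure.volumeIoiPow n = ∫ r in Set.Ioi (0 : ℝ), r ^ n • g r := by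
  have hmeas : Measurable fun r : Set.Ioi (0 : ℝ) => ENNReal.ofReal ((r : ℝ) ^ n) := by fun_prop
  rw [Measure.volumeIoiPow, integral_withDensity_eq_integral_toReal_smul hmeas (by simp),
    ← integral_subtype_comap measurableSet_Ioi fun r : ℝ => r ^ n • g r]
  refine integral_congr_ae (.of_forall fun r => ?_)
  simp only [ENNReal.toReal_ofReal (pow_nonneg (le_of_lt r.2) n)]

theorem integral_eq_integral_toSphere_integral_Ioi {f : E → F} (hf : Integrable f μ) :
    ∫ v, f v ∂μ = ∫ u : sphere (0 : E) 1, ∫ r in Set.Ioi (0 : ℝ),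
      r ^ (Module.finrank ℝ E - 1) • f (r • (u : E)) ∂volume ∂μ.toSphere := by
  have hpolar := μ.measurePreserving_homeomorphUnitSphereProd.symm
    (homeomorphUnitSphereProd E).toMeasurableEquiv
  have hemb := (homeomorphUnitSphereProd E).symm.measurableEmbedding
  have hint : Integrable (fun v : ({0}ᶜ : Set E) => f v) (μ.comap (↑)) :=
    (integrableOn_iff_comap_subtypeVal (measurableSet_singleton _).compl).1 hf.integrableOn
  calc
    ∫ v, f v ∂μ = ∫ v : ({0}ᶜ : Set E), f v ∂(μ.comap (↑)) := by
      rw [integral_subtype_comap (measurableSet_singleton _).compl, restrict_compl_singleton]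
    _ = ∫ p, f ((homeomorphUnitSphereProd E).symm p)
          ∂μ.toSphere.prod (.volumeIoiPow (Module.finrank ℝ E - 1)) :=
      (hpolar.integral_comp hemb fun v : ({0}ᶜ : Set E) => f v).symm
    _ = ∫ u : sphere (0 : E) 1, ∫ r : Set.Ioi (0 : ℝ), f ((r : ℝ) • (u : E))
          ∂.volumeIoiPow (Module.finrank ℝ E - 1) ∂μ.toSphere :=
      integral_prod _ ((hpolar.integrable_comp_emb hemb).2 hint)
    _ = _ := integral_congr_ae (.of_forall fun u =>
      integral_volumeIoiPow _ fun r => f (r • (u : E)))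

theorem setIntegral_eq_integral_toSphere_intervalIntegral {s : Set E} (hs : MeasurableSet s)
    {f : E → F} (hf : IntegrableOn f s μ) {ρ : sphere (0 : E) 1 → ℝ} (hρ : ∀ u, 0 ≤ ρ u)
    (hsρ : ∀ u : sphere (0 : E) 1, ∀ r > 0, r • (u : E) ∈ s ↔ r ≤ ρ u) :
    ∫ v in s, f v ∂μ = ∫ u : sphere (0 : E) 1, ∫ r in 0..ρ u,
      r ^ (Module.finrank ℝ E - 1) • f (r • (u : E)) ∂volume ∂μ.toSphere := by
  rw [← integral_indicator hs,
    integral_eq_integral_toSphere_integral_Ioi μ ((integrable_indicator_iff hs).2 hf)]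
  refine integral_congr_ae (.of_forall fun u => ?_)
  dsimp only
  rw [intervalIntegral.integral_of_le (hρ u), ← Set.Ioi_inter_Iic,
    ← setIntegral_indicator measurableSet_Iic]
  refine setIntegral_congr_fun measurableSet_Ioi fun r hr => ?_
  by_cases hru : r ≤ ρ u <;> simp [Set.indicator, hsρ u r hr, hru]

end Polar

section RayExit

variable {E : Type*} [NormedAddCommGroup E] [InnerProductSpace ℝ E]

/-- The distance at which the ray from the origin in the unit direction `u` leaves the closed unit
ball about `y`, for `‖y‖ < 1`: the larger root `r` of `‖r • u - y‖ ^ 2 = 1`. -/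
noncomputable def rayExit (y u : E) : ℝ :=
  ⟪u, y⟫ + √(1 - ‖y‖ ^ 2 + ⟪u, y⟫ ^ 2)

theorem rayExit_zero (u : E) : rayExit 0 u = 1 := by
  simp [rayExit]

theorem rayExit_discrim_pos {y : E} (hy : ‖y‖ < 1) (u : E) : 0 < 1 - ‖y‖ ^ 2 + ⟪u, y⟫ ^ 2 := by
  have : ‖y‖ ^ 2 < 1 := pow_lt_one₀ (norm_nonneg y) hy two_ne_zero
  nlinarith [sq_nonneg ⟪u, y⟫]

theorem sq_inner_le_rayExit_discrim {y : E} (hy : ‖y‖ ≤ 1) (u : E) :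
    ⟪u, y⟫ ^ 2 ≤ 1 - ‖y‖ ^ 2 + ⟪u, y⟫ ^ 2 := by
  have : ‖y‖ ^ 2 ≤ 1 := pow_le_one₀ (norm_nonneg y) hy
  linarith

theorem rayExit_nonneg {y : E} (hy : ‖y‖ ≤ 1) (u : E) : 0 ≤ rayExit y u := by
  have := (abs_le.1 (Real.abs_le_sqrt (sq_inner_le_rayExit_discrim hy u))).1
  rw [rayExit]
  linarith

theorem smul_mem_closedBall_iff_le_rayExit {y u : E} (hy : ‖y‖ ≤ 1) (hu : ‖u‖ = 1) {r : ℝ}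
    (hr : 0 < r) : r • u ∈ closedBall y 1 ↔ r ≤ rayExit y u := by
  have hsq : ‖r • u - y‖ ^ 2 = (r - ⟪u, y⟫) ^ 2 + ‖y‖ ^ 2 - ⟪u, y⟫ ^ 2 := by
    rw [norm_sub_sq_real, norm_smul, hu, real_inner_smul_left, Real.norm_eq_abs, mul_one, sq_abs]
    ring
  have hlower : -√(1 - ‖y‖ ^ 2 + ⟪u, y⟫ ^ 2) ≤ r - ⟪u, y⟫ := by
    linarith [(abs_le.1 (Real.abs_le_sqrt (sq_inner_le_rayExit_discrim hy u))).2]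
  have hdiscrim : 0 ≤ 1 - ‖y‖ ^ 2 + ⟪u, y⟫ ^ 2 :=
    (sq_nonneg _).trans (sq_inner_le_rayExit_discrim hy u)
  calc
    r • u ∈ closedBall y 1 ↔ ‖r • u - y‖ ^ 2 ≤ 1 := by
      rw [mem_closedBall, dist_eq_norm, sq_le_one_iff₀ (norm_nonneg _)]
    _ ↔ (r - ⟪u, y⟫) ^ 2 ≤ 1 - ‖y‖ ^ 2 + ⟪u, y⟫ ^ 2 := by
      rw [hsq]
      constructor <;> intro h <;> linarith
    _ ↔ r - ⟪u, y⟫ ≤ √(1 - ‖y‖ ^ 2 + ⟪u, y⟫ ^ 2) := by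
      rw [Real.sq_le hdiscrim, and_iff_right hlower]
    _ ↔ r ≤ rayExit y u := by rw [rayExit, sub_le_iff_le_add']

theorem continuous_rayExit : Continuous fun p : E × E => rayExit p.1 p.2 := by
  unfold rayExit
  fun_prop

/-- The derivative of `rayExit` in the centre of the ball. -/
noncomputable def rayExitDeriv (y u : E) : E →L[ℝ] ℝ :=
  innerSL ℝ u + (√(1 - ‖y‖ ^ 2 + ⟪u, y⟫ ^ 2))⁻¹ • (⟪u, y⟫ • innerSL ℝ u - innerSL ℝ y)

theorem rayExitDeriv_zero (u : E) : rayExitDeriv 0 u = innerSL ℝ u := by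
  simp [rayExitDeriv]

theorem hasFDerivAt_rayExit {y : E} (hy : ‖y‖ < 1) (u : E) :
    HasFDerivAt (rayExit · u) (rayExitDeriv y u) y := by
  have hinner : HasFDerivAt (fun y => ⟪u, y⟫) (innerSL ℝ u) y := (innerSL ℝ u).hasFDerivAt
  have hdiscrim : HasFDerivAt (fun y => 1 - ‖y‖ ^ 2 + ⟪u, y⟫ ^ 2)
      ((2 : ℝ) • (⟪u, y⟫ • innerSL ℝ u - innerSL ℝ y)) y := by
    refine (((hasStrictFDerivAt_norm_sq y).hasFDerivAt.const_sub 1).add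
      (hinner.pow 2)).congr_fderiv ?_
    module
  refine (hinner.add (hdiscrim.sqrt (rayExit_discrim_pos hy u).ne')).congr_fderiv ?_
  rw [rayExitDeriv]
  module

theorem continuousOn_rayExitDeriv :
    ContinuousOn (fun p : E × E => rayExitDeriv p.1 p.2) (ball 0 1 ×ˢ Set.univ) := by
  have hinv : ContinuousOn (fun p : E × E => (√(1 - ‖p.1‖ ^ 2 + ⟪p.2, p.1⟫ ^ 2))⁻¹)
      (ball 0 1 ×ˢ Set.univ) := by
    refine ContinuousOn.inv₀ (by fun_prop) fun p hp => ?_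
    exact (Real.sqrt_pos.2 (rayExit_discrim_pos (mem_ball_zero_iff.1 hp.1) p.2)).ne'
  unfold rayExitDeriv
  fun_prop

end RayExit

section RayExitIntegral

variable {E F : Type*} [NormedAddCommGroup E] [InnerProductSpace ℝ E]
  [NormedAddCommGroup F] [NormedSpace ℝ F] [CompleteSpace F]

theorem hasFDerivAt_intervalIntegral_rayExit {y : E} (hy : ‖y‖ < 1) (u : E) {g : ℝ → F}
    (hg : Continuous g) :
    HasFDerivAt (fun y => ∫ r in 0..rayExit y u, g r)
      ((rayExitDeriv y u).smulRight (g (rayExit y u))) y :=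
  (hg.integral_hasStrictDerivAt 0 _).hasDerivAt.hasFDerivAt.comp y (hasFDerivAt_rayExit hy u)

variable [FiniteDimensional ℝ E] [MeasurableSpace E] [BorelSpace E]

theorem hasFDerivAt_integral_intervalIntegral_rayExit (ν : Measure (sphere (0 : E) 1))
    [IsFiniteMeasure ν] {φ : sphere (0 : E) 1 → ℝ → F}
    (hφ : Continuous fun p : sphere (0 : E) 1 × ℝ => φ p.1 p.2) :
    HasFDerivAt (fun y : E => ∫ u, ∫ r in 0..rayExit y (u : E), φ u r ∂volume ∂ν)
      (∫ u, (innerSL ℝ (u : E)).smulRight (φ u 1) ∂ν) 0 := by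
  have hray : Continuous fun p : E × sphere (0 : E) 1 => rayExit p.1 (p.2 : E) :=
    continuous_rayExit.comp (continuous_fst.prodMk (continuous_subtype_val.comp continuous_snd))
  have hrayDeriv : ContinuousOn (fun p : E × sphere (0 : E) 1 => rayExitDeriv p.1 (p.2 : E))
      (ball 0 1 ×ˢ Set.univ) :=
    continuousOn_rayExitDeriv.comp (f := fun p : E × sphere (0 : E) 1 => (p.1, (p.2 : E)))
      (by fun_prop) fun p hp => ⟨hp.1, trivial⟩
  have hφray : Continuous fun p : E × sphere (0 : E) 1 => φ p.2 (rayExit p.1 (p.2 : E)) :=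
    hφ.comp (continuous_snd.prodMk hray)
  have hderiv := hasFDerivAt_setIntegral_of_continuousOn_fderiv (ν := ν) isCompact_univ
    (ball_mem_nhds (0 : E) one_pos)
    (Φ := fun y u => ∫ r in 0..rayExit y (u : E), φ u r)
    (Φ' := fun (y : E) (u : sphere (0 : E) 1) =>
      (rayExitDeriv y (u : E)).smulRight (φ u (rayExit y (u : E))))
    (fun y _ => (intervalIntegral.continuous_parametric_intervalIntegral_of_continuous hφ
      (hray.comp (Continuous.prodMk_right y))).continuousOn)
    ((ContinuousLinearMap.smulRightL ℝ E F).continuous₂.comp_continuousOn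
      (hrayDeriv.prodMk hφray.continuousOn))
    fun y hy u _ => hasFDerivAt_intervalIntegral_rayExit (mem_ball_zero_iff.1 hy) (u : E)
      (hφ.comp (Continuous.prodMk_right u))
  simpa only [Measure.restrict_univ, rayExitDeriv_zero, rayExit_zero] using hderiv

end RayExitIntegral

section Translation

variable {E F : Type*} [NormedAddCommGroup E] [MeasurableSpace E] [BorelSpace E]
  [NormedAddCommGroup F] [NormedSpace ℝ F] (μ : Measure E) [μ.IsAddLeftInvariant]

theorem setIntegral_closedBall_add_left (f : E → F) (y : E) (r : ℝ) :
    ∫ v in closedBall (0 : E) r, f (y + v) ∂μ = ∫ v in closedBall y r, f v ∂μ := by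
  have hpre : (y + ·) ⁻¹' closedBall y r = closedBall 0 r := by simp
  rw [← hpre, (measurePreserving_add_left μ y).setIntegral_preimage_emb
    (measurableEmbedding_addLeft y)]

end Translation

section MovingBall

variable {E F : Type*} [NormedAddCommGroup E] [InnerProductSpace ℝ E] [Nontrivial E]
  [FiniteDimensional ℝ E] [MeasurableSpace E] [BorelSpace E]
  [NormedAddCommGroup F] [NormedSpace ℝ F]
  (μ : Measure E) [μ.IsAddHaarMeasure]

theorem setIntegral_closedBall_eq_integral_toSphere_rayExit {f : E → F} (hf : Continuous f)
    {y : E} (hy : ‖y‖ ≤ 1) :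
    ∫ v in closedBall y 1, f v ∂μ = ∫ u : sphere (0 : E) 1, ∫ r in 0..rayExit y u,
      r ^ (Module.finrank ℝ E - 1) • f (r • (u : E)) ∂volume ∂μ.toSphere :=
  setIntegral_eq_integral_toSphere_intervalIntegral μ measurableSet_closedBall
    (hf.continuousOn.integrableOn_compact (isCompact_closedBall y 1))
    (fun u => rayExit_nonneg hy u)
    fun u _ hr => smul_mem_closedBall_iff_le_rayExit hy (norm_eq_of_mem_sphere u) hr

theorem hasFDerivAt_setIntegral_closedBall_center [CompleteSpace F] {f : E → F}
    (hf : Continuous f) :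
    HasFDerivAt (fun y => ∫ v in closedBall y 1, f v ∂μ)
      (∫ u : sphere (0 : E) 1, (innerSL ℝ (u : E)).smulRight (f u) ∂μ.toSphere) 0 := by
  have hpolar := hasFDerivAt_integral_intervalIntegral_rayExit μ.toSphere
    (φ := fun u r => r ^ (Module.finrank ℝ E - 1) • f (r • (u : E))) (by fun_prop)
  simp only [one_pow, one_smul] at hpolar
  refine hpolar.congr_of_eventuallyEq ?_
  filter_upwards [ball_mem_nhds 0 one_pos] with y hy
  exact setIntegral_closedBall_eq_integral_toSphere_rayExit μ hf (mem_ball_zero_iff.1 hy).le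

theorem hasFDerivAt_setIntegral_closedBall_comp_add_smul [CompleteSpace F] {f : E → F}
    (hf : Continuous f) {δ : ℝ} (hδ : δ ≠ 0) (x : E) :
    HasFDerivAt (fun y => ∫ v in closedBall (0 : E) 1, f (y + δ • v) ∂μ)
      (δ⁻¹ • ∫ u : sphere (0 : E) 1, (innerSL ℝ (u : E)).smulRight (f (x + δ • (u : E)))
        ∂μ.toSphere) x := by
  have hshift : HasFDerivAt (fun y => δ⁻¹ • (y - x)) (δ⁻¹ • ContinuousLinearMap.id ℝ E) x :=
    ((hasFDerivAt_id x).sub_const x).const_smul δ⁻¹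
  have hcenter : HasFDerivAt (fun y => ∫ v in closedBall y 1, f (x + δ • v) ∂μ)
      (∫ u : sphere (0 : E) 1, (innerSL ℝ (u : E)).smulRight (f (x + δ • (u : E))) ∂μ.toSphere)
      (δ⁻¹ • (x - x)) := by
    rw [sub_self, smul_zero]
    exact hasFDerivAt_setIntegral_closedBall_center μ (by fun_prop)
  refine ((hcenter.comp x hshift).congr_fderiv (by simp)).congr_of_eventuallyEq
    (.of_forall fun y => ?_)
  simp only [Function.comp_apply, ← setIntegral_closedBall_add_left μ _ (δ⁻¹ • (y - x)),
    smul_add, smul_inv_smul₀ hδ, ← add_assoc, add_sub_cancel]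

end MovingBall

section Dual

variable {E : Type*} [NormedAddCommGroup E] [InnerProductSpace ℝ E] [CompleteSpace E]

theorem toDual_symm_integral {X : Type*} [MeasurableSpace X] (ν : Measure X)
    (φ : X → StrongDual ℝ E) :
    (InnerProductSpace.toDual ℝ E).symm (∫ a, φ a ∂ν) =
      ∫ a, (InnerProductSpace.toDual ℝ E).symm (φ a) ∂ν :=
  ((InnerProductSpace.toDual ℝ E).symm.toContinuousLinearEquiv.integral_comp_comm φ).symm

theorem toDual_symm_innerSL_smulRight (u : E) (c : ℝ) :
    (InnerProductSpace.toDual ℝ E).symm ((innerSL ℝ u).smulRight c) = c • u := by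
  rw [LinearIsometryEquiv.symm_apply_eq]
  ext w
  simp [mul_comm]

end Dual

section Gradient

variable {E : Type*} [NormedAddCommGroup E] [InnerProductSpace ℝ E] [FiniteDimensional ℝ E]

theorem hasGradientAt_setAverage_comp_add {X : Type*} [TopologicalSpace X] [T2Space X]
    [MeasurableSpace X] [OpensMeasurableSpace X] {ν : Measure X} [IsFiniteMeasureOnCompacts ν]
    {K : Set X} (hK : IsCompact K) {f : E → ℝ} (hf : ContDiff ℝ 1 f) {φ : X → E}
    (hφ : ContinuousOn φ K) (x : E) :
    HasGradientAt (fun y => ⨍ a in K, f (y + φ a) ∂ν) (⨍ a in K, ∇ f (x + φ a) ∂ν) x := by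
  have hadd : ContinuousOn (fun p : E × X => p.1 + φ p.2) (Set.univ ×ˢ K) :=
    continuousOn_fst.add (hφ.comp continuousOn_snd fun p hp => hp.2)
  have hderiv : HasFDerivAt (fun y => ∫ a in K, f (y + φ a) ∂ν)
      (∫ a in K, fderiv ℝ f (x + φ a) ∂ν) x :=
    hasFDerivAt_setIntegral_of_continuousOn_fderiv hK Filter.univ_mem
      (Φ' := fun y a => fderiv ℝ f (y + φ a))
      (fun y _ => hf.continuous.comp_continuousOn (continuousOn_const.add hφ))
      ((hf.continuous_fderiv one_ne_zero).comp_continuousOn hadd)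
      fun y _ a _ => (hasFDerivAt_comp_add_right (φ a)).2
        (hf.differentiable one_ne_zero _).hasFDerivAt
  simpa only [setAverage_eq, gradient, map_smulₛₗ, conj_trivial, toDual_symm_integral] using
    hasFDerivAt_iff_hasGradientAt.1 (hderiv.fun_const_smul (ν.real K)⁻¹)

variable [Nontrivial E] [MeasurableSpace E] [BorelSpace E] (μ : Measure E) [μ.IsAddHaarMeasure]

theorem hasGradientAt_average_closedBall {f : E → ℝ} (hf : Continuous f) {δ : ℝ} (hδ : δ ≠ 0)
    (x : E) :
    HasGradientAt (fun y => ⨍ v in closedBall (0 : E) 1, f (y + δ • v) ∂μ)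
      (((Module.finrank ℝ E : ℝ) / δ) •
        ⨍ u : sphere (0 : E) 1, f (x + δ • (u : E)) • (u : E) ∂μ.toSphere) x := by
  have hfinrank : (Module.finrank ℝ E : ℝ) ≠ 0 := Nat.cast_ne_zero.2 Module.finrank_pos.ne'
  have hball : μ.real (closedBall (0 : E) 1) = μ.real (ball (0 : E) 1) := by
    simp only [Measure.real, Measure.addHaar_closedBall_eq_addHaar_ball]
  have hgrad := hasFDerivAt_iff_hasGradientAt.1
    ((hasFDerivAt_setIntegral_closedBall_comp_add_smul μ hf hδ x).fun_const_smul
      (μ.real (closedBall (0 : E) 1))⁻¹)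
  simp only [map_smulₛₗ, conj_trivial, toDual_symm_integral, toDual_symm_innerSL_smulRight]
    at hgrad
  simp only [setAverage_eq]
  convert hgrad using 1
  rw [average_eq, μ.toSphere_real_apply_univ, hball, smul_smul, smul_smul]
  congr 1
  field_simp

theorem zeroth_order_estimator_unbiased_general {f : E → ℝ} (hf : Continuous f) {δ : ℝ}
    (hδ : δ ≠ 0) (x : E) :
    (ContDiff ℝ 1 f →
      ((Module.finrank ℝ E : ℝ) / δ) •
          (⨍ u : sphere (0 : E) 1, f (x + δ • (u : E)) • (u : E) ∂μ.toSphere) =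
        ⨍ v in closedBall (0 : E) 1, ∇ f (x + δ • v) ∂μ) ∧
    HasGradientAt (fun y => ⨍ v in closedBall (0 : E) 1, f (y + δ • v) ∂μ)
      (((Module.finrank ℝ E : ℝ) / δ) •
        ⨍ u : sphere (0 : E) 1, f (x + δ • (u : E)) • (u : E) ∂μ.toSphere) x := by
  have hgrad := hasGradientAt_average_closedBall μ hf hδ x
  refine ⟨fun hf₁ => hgrad.unique ?_, hgrad⟩
  exact hasGradientAt_setAverage_comp_add (isCompact_closedBall 0 1) hf₁ (by fun_prop) x

end Gradient

/-- Unbiasedness of the single-point zeroth-order gradient estimator: for a `C¹`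
function `f`, `(d/δ) E[f(x+δu) u]` over the uniform unit sphere equals the
average of `∇f(x+δv)` over the uniform unit ball; equivalently it is the gradient
at `x` of `y ↦ E[f(y+δv)]`. -/
theorem zeroth_order_estimator_unbiased (d : ℕ) (hd : 1 ≤ d)
    (f : EuclideanSpace ℝ (Fin d) → ℝ) (hf : ContDiff ℝ 1 f)
    (δ : ℝ) (hδ : 0 < δ) (x : EuclideanSpace ℝ (Fin d)) :
    ((d : ℝ) / δ) • (∫ u : sphere (0 : EuclideanSpace ℝ (Fin d)) 1,
        f (x + δ • (u : EuclideanSpace ℝ (Fin d))) • (u : EuclideanSpace ℝ (Fin d))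
        ∂(sphereUniform d)) =
      (⨍ v in closedBall (0 : EuclideanSpace ℝ (Fin d)) 1, ∇ f (x + δ • v)) ∧
    ∇ (fun y => ⨍ v in closedBall (0 : EuclideanSpace ℝ (Fin d)) 1, f (y + δ • v)) x =
      ((d : ℝ) / δ) • (∫ u : sphere (0 : EuclideanSpace ℝ (Fin d)) 1,
        f (x + δ • (u : EuclideanSpace ℝ (Fin d))) • (u : EuclideanSpace ℝ (Fin d))
        ∂(sphereUniform d)) := by
  have : Nonempty (Fin d) := ⟨⟨0, hd⟩⟩
  have h := zeroth_order_estimator_unbiased_general volume hf.continuous hδ.ne' x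
  rw [finrank_euclideanSpace_fin] at h
  -- The integral against `sphereUniform d` is definitionally the average against `toSphere`.
  exact ⟨h.1 hf, h.2.gradient⟩
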